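/- Let A ⊆ 𝔸 be an annular continuum with empty interior. Then 𝒞⁻(A) = 𝒞⁺(A) = ∂𝒰(A) ∩ ∂ℒ(A), and this set is the only circloid contained in A. -/

import Mathlib

open Filter Topology

local notation "⟪" x ", " y "⟫" => @inner ℝ _ _ x y

noncomputable section

/-- The open annulus `𝔸 = 𝕋¹ × ℝ`. -/
abbrev Ann := AddCircle (1 : ℝ) × ℝ

/-- `S ⊆ 𝔸` is unbounded from above in the `ℝ`-coordinate. -/
def UnbAbove (S : Set Ann) : Prop := ¬ BddAbove (Prod.snd '' S)

/-- `S ⊆ 𝔸` is unbounded from below in the `ℝ`-coordinate. -/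
def UnbBelow (S : Set Ann) : Prop := ¬ BddBelow (Prod.snd '' S)

/-- `S ⊆ 𝔸` is bounded (equivalently, bounded in the `ℝ`-coordinate). -/
def BoundedA (S : Set Ann) : Prop := BddAbove (Prod.snd '' S) ∧ BddBelow (Prod.snd '' S)

/-- `E ⊆ 𝔸` is essential: no connected component of its complement is unbounded both
above and below. -/
def EssentialA (E : Set Ann) : Prop :=
  ∀ x ∈ Eᶜ, ¬ (UnbAbove (connectedComponentIn Eᶜ x) ∧ UnbBelow (connectedComponentIn Eᶜ x))

/-- An annular continuum: a compact connected set whose complement has exactly two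
connected components, both unbounded. -/
def IsAnnularContinuum (E : Set Ann) : Prop :=
  IsCompact E ∧ IsConnected E ∧
  (∀ x ∈ Eᶜ, ¬ BoundedA (connectedComponentIn Eᶜ x)) ∧
  ∃ x y, x ∈ Eᶜ ∧ y ∈ Eᶜ ∧ connectedComponentIn Eᶜ x ≠ connectedComponentIn Eᶜ y ∧
    ∀ z ∈ Eᶜ, connectedComponentIn Eᶜ z = connectedComponentIn Eᶜ x ∨
      connectedComponentIn Eᶜ z = connectedComponentIn Eᶜ y

/-- A circloid: an annular continuum containing no strictly smaller annular continuum. -/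
def IsCircloidA (C : Set Ann) : Prop :=
  IsAnnularContinuum C ∧ ∀ E ⊆ C, IsAnnularContinuum E → E = C

/-- `ℒ(U)`: the connected component of `𝔸 \ cl(U)` unbounded from below (for a
generating set it is unique; in general we take the union of all components of
`𝔸 \ cl(U)` unbounded from below). -/
def lowerComp (U : Set Ann) : Set Ann :=
  {z | z ∈ (closure U)ᶜ ∧ UnbBelow (connectedComponentIn (closure U)ᶜ z)}

/-- `𝒰(L)`: the connected component of `𝔸 \ cl(L)` unbounded from above. -/
def upperComp (L : Set Ann) : Set Ann :=
  {z | z ∈ (closure L)ᶜ ∧ UnbAbove (connectedComponentIn (closure L)ᶜ z)}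

/-- An upper generating set: bounded from below with essential closure. -/
def UpperGen (U : Set Ann) : Prop := BddBelow (Prod.snd '' U) ∧ EssentialA (closure U)

/-- A lower generating set: bounded from above with essential closure. -/
def LowerGen (L : Set Ann) : Prop := BddAbove (Prod.snd '' L) ∧ EssentialA (closure L)

/-- `𝒞⁻(U) = 𝔸 \ (𝒰ℒ(U) ∪ ℒ𝒰ℒ(U))`. -/
def Cminus (U : Set Ann) : Set Ann :=
  (upperComp (lowerComp U) ∪ lowerComp (upperComp (lowerComp U)))ᶜ

/-- `𝒞⁺(L) = 𝔸 \ (ℒ𝒰(L) ∪ 𝒰ℒ𝒰(L))`. -/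
def Cplus (L : Set Ann) : Set Ann :=
  (lowerComp (upperComp L) ∪ upperComp (lowerComp (upperComp L)))ᶜ

/-!
Write `U = 𝒰(A)` and `L = ℒ(A)`, so that the complement of `A` is the disjoint union of `U` and
`L`. Since `A` has empty interior, `closure U` and `closure L` cover the annulus. Hence the
complement of `closure L` lies between `U` and `closure U`, so it is connected and has the same
closure as `U`, and symmetrically for `L`; this makes `𝒞⁻(A)` and `𝒞⁺(A)` both equal to
`F = closure U ∩ closure L`, the intersection of the two frontiers. An annular continuum `E ⊆ A`
has `U ⊆ 𝒰(E)` and `L ⊆ ℒ(E)`, so it contains `F`. It remains to see that `F` is connected: the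
annulus is not unicoherent, but the intersection of two closed connected sets covering it is
connected as soon as one of them contains a horizontal circle, because circle-valued maps that are
trivial on that circle lift to `ℝ`.
-/

/-! ### Connected components, frontiers and circle-valued maps -/

section General

variable {X : Type*} [TopologicalSpace X]

theorem connectedComponentIn_union_eq_left {U V : Set X} (hU : IsOpen U) (hV : IsOpen V)
    (hUV : Disjoint U V) (hUc : IsPreconnected U) {z : X} (hz : z ∈ U) :
    connectedComponentIn (U ∪ V) z = U :=
  (isPreconnected_connectedComponentIn.subset_left_of_subset_union hU hV hUV
      (connectedComponentIn_subset _ _) ⟨z, mem_connectedComponentIn (Or.inl hz), hz⟩).antisymm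
    (hUc.subset_connectedComponentIn hz Set.subset_union_left)

theorem disjoint_connectedComponentIn {F : Set X} {x y : X}
    (h : connectedComponentIn F x ≠ connectedComponentIn F y) :
    Disjoint (connectedComponentIn F x) (connectedComponentIn F y) :=
  Set.disjoint_left.2 fun _ hx hy =>
    h ((connectedComponentIn_eq hx).trans (connectedComponentIn_eq hy).symm)

theorem connectedComponentIn_mem_of_frequently {l : Filter X} {F V : Set X} {x : X}
    (hV : IsPreconnected V) (hVl : V ∈ l) (hVF : V ⊆ F)
    (hfreq : ∃ᶠ z in l, z ∈ connectedComponentIn F x) : connectedComponentIn F x ∈ l := by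
  obtain ⟨z, hz, hzV⟩ := (hfreq.and_eventually hVl).exists
  rw [connectedComponentIn_eq hz]
  exact mem_of_superset hVl (hV.subset_connectedComponentIn hzV hVF)

theorem frontier_inter_frontier_of_disjoint {U V : Set X} (hU : IsOpen U) (hV : IsOpen V)
    (hUV : Disjoint U V) :
    frontier U ∩ frontier V = closure U ∩ closure V := by
  rw [hU.frontier_eq, hV.frontier_eq]
  have hU' := Set.disjoint_left.1 (hUV.closure_right hU)
  have hV' := Set.disjoint_left.1 (hUV.closure_left hV)
  ext z
  exact ⟨fun hz => ⟨hz.1.1, hz.2.1⟩,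
    fun hz => ⟨⟨hz.1, fun hzU => hU' hzU hz.2⟩, hz.2, hV' hz.1⟩⟩

theorem closure_compl_closure_of_disjoint {U V : Set X} (hU : IsOpen U)
    (hdisj : Disjoint U V) (hcover : closure V ∪ closure U = Set.univ) :
    closure (closure V)ᶜ = closure U :=
  (closure_minimal (Set.compl_subset_iff_union.2 hcover) isClosed_closure).antisymm
    (closure_mono (hdisj.closure_right hU).subset_compl_right)

theorem isPreconnected_compl_closure_of_disjoint {U V : Set X} (hU : IsOpen U)
    (hUc : IsPreconnected U) (hdisj : Disjoint U V)
    (hcover : closure V ∪ closure U = Set.univ) : IsPreconnected (closure V)ᶜ :=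
  hUc.subset_closure (hdisj.closure_right hU).subset_compl_right
    (Set.compl_subset_iff_union.2 hcover)

theorem exists_continuousMap_eqOn_of_eqOn_inter {Y : Type*} [TopologicalSpace Y]
    {P Q : Set X} (hP : IsClosed P) (hQ : IsClosed Q) (hPQ : P ∪ Q = Set.univ)
    (f₁ f₂ : C(X, Y)) (h : Set.EqOn f₁ f₂ (P ∩ Q)) :
    ∃ g : C(X, Y), Set.EqOn g f₁ P ∧ Set.EqOn g f₂ Q := by
  classical
  have eqOn_left : Set.EqOn (P.piecewise f₁ f₂) f₁ P := Set.piecewise_eqOn P f₁ f₂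
  have eqOn_right : Set.EqOn (P.piecewise f₁ f₂) f₂ Q := fun z hz => by
    by_cases hzP : z ∈ P
    · rw [Set.piecewise_eq_of_mem _ _ _ hzP, h ⟨hzP, hz⟩]
    · exact Set.piecewise_eq_of_notMem _ _ _ hzP
  have hcont : Continuous (P.piecewise f₁ f₂) := by
    rw [← continuousOn_univ, ← hPQ]
    exact (f₁.continuous.continuousOn.congr eqOn_left).union_of_isClosed
      (f₂.continuous.continuousOn.congr eqOn_right) hP hQ
  exact ⟨⟨_, hcont⟩, eqOn_left, eqOn_right⟩

theorem sub_eq_sub_of_addCircle_coe_eqOn {S : Set X} {p : ℝ} (hS : IsPreconnected S)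
    {h f : X → ℝ} (hh : ContinuousOn h S) (hf : ContinuousOn f S)
    (heq : ∀ x ∈ S, (h x : AddCircle p) = f x) {x y : X} (hx : x ∈ S) (hy : y ∈ S) :
    h x - f x = h y - f y := by
  have coe_sub_eq_zero : ∀ z ∈ S, ((h z - f z : ℝ) : AddCircle p) = 0 := fun z hz => by
    rw [AddCircle.coe_sub, heq z hz, sub_self]
  exact (AddCircle.isCoveringMap_coe p).constOn_of_comp hS (hh.sub hf)
    (fun z hz w hw => (coe_sub_eq_zero z hz).trans (coe_sub_eq_zero w hw).symm) hx hy

-- If `P ∩ Q` were disconnected, an Urysohn function `f` equal to `0` on one piece and to `1` on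
-- the other would descend to a circle map that is `0` on `P` and `f` on `Q`; a real lift of it is
-- constant on `P` but grows by `1` between the two pieces along `Q`.
theorem isPreconnected_inter_of_exists_lift [NormalSpace X] {P Q : Set X} (hPc : IsClosed P)
    (hQc : IsClosed Q) (hP : IsPreconnected P) (hQ : IsPreconnected Q) (hPQ : P ∪ Q = Set.univ)
    (hlift : ∀ g : C(X, UnitAddCircle), Set.EqOn g 0 P →
      ∃ h : C(X, ℝ), ∀ z, (h z : UnitAddCircle) = g z) :
    IsPreconnected (P ∩ Q) := by
  rw [isPreconnected_closed_iff]
  rintro s t hs ht hst ⟨a, haPQ, has⟩ ⟨b, hbPQ, hbt⟩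
  by_contra hempty
  have hdisj : Disjoint (P ∩ Q ∩ s) (P ∩ Q ∩ t) :=
    Set.disjoint_left.2 fun z hzs hzt => hempty ⟨z, hzs.1, hzs.2, hzt.2⟩
  obtain ⟨f, hf_zero, hf_one, -⟩ := exists_continuous_zero_one_of_isClosed
    ((hPc.inter hQc).inter hs) ((hPc.inter hQc).inter ht) hdisj
  let fCircle : C(X, UnitAddCircle) := ⟨fun z => (f z : UnitAddCircle), by fun_prop⟩
  have fCircle_eqOn_zero : Set.EqOn fCircle (0 : C(X, UnitAddCircle)) (P ∩ Q) := fun z hz => by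
    rcases hst hz with hzs | hzt
    · simp [fCircle, hf_zero ⟨hz, hzs⟩]
    · simp [fCircle, hf_one ⟨hz, hzt⟩]
  obtain ⟨g, hgP, hgQ⟩ :=
    exists_continuousMap_eqOn_of_eqOn_inter hPc hQc hPQ 0 fCircle fCircle_eqOn_zero.symm
  obtain ⟨h, hh⟩ := hlift g hgP
  have diff_on_P : h a - 0 = h b - 0 :=
    sub_eq_sub_of_addCircle_coe_eqOn hP h.continuous.continuousOn continuousOn_const
      (fun z hz => (hh z).trans (hgP hz)) haPQ.1 hbPQ.1
  have diff_on_Q : h a - f a = h b - f b :=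
    sub_eq_sub_of_addCircle_coe_eqOn hQ h.continuous.continuousOn f.continuous.continuousOn
      (fun z hz => (hh z).trans (hgQ hz)) haPQ.2 hbPQ.2
  have hfa : f a = 0 := hf_zero ⟨haPQ, has⟩
  have hfb : f b = 1 := hf_one ⟨hbPQ, hbt⟩
  linarith

end General

/-! ### Partial unicoherence of a product with a circle -/

theorem exists_real_lift_addCircle {Z : Type*} [TopologicalSpace Z] [SimplyConnectedSpace Z]
    [LocallyPathConnectedSpace Z] {p : ℝ} (g : C(Z, AddCircle p)) :
    ∃ h : C(Z, ℝ), ∀ z, (h z : AddCircle p) = g z := by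
  obtain ⟨z₀⟩ : Nonempty Z := inferInstance
  obtain ⟨t₀, ht₀⟩ := QuotientAddGroup.mk_surjective (g z₀)
  obtain ⟨h, ⟨-, hh⟩, -⟩ :=
    (AddCircle.isCoveringMap_coe p).existsUnique_continuousMap_lifts g z₀ t₀ ht₀
  exact ⟨h, congrFun hh⟩

-- The lift to `ℝ × Y` changes by a constant under `x ↦ x + T`, and this constant can be computed on
-- the circle over `y₀`, where the real lift `f` makes it vanish.
theorem exists_real_lift_addCircle_prod {Y : Type*} [TopologicalSpace Y] [ContractibleSpace Y]
    [LocallyPathConnectedSpace Y] {T p : ℝ} (g : C(AddCircle T × Y, AddCircle p)) {y₀ : Y}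
    (f : C(AddCircle T, ℝ)) (hf : ∀ x, g (x, y₀) = (f x : AddCircle p)) :
    ∃ h : C(AddCircle T × Y, ℝ), ∀ z, (h z : AddCircle p) = g z := by
  have hq : IsOpenQuotientMap (fun w : ℝ × Y => ((w.1 : AddCircle T), w.2)) :=
    QuotientAddGroup.isOpenQuotientMap_mk.prodMap IsOpenQuotientMap.id
  obtain ⟨H, hH⟩ := exists_real_lift_addCircle (g.comp ⟨_, hq.continuous⟩)
  have hH_coe (x : ℝ) (y : Y) : (H (x, y) : AddCircle p) = g (x, y) := hH (x, y)
  have period_at_y₀ : H (T, y₀) = H (0, y₀) := by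
    have lift_sub_f_const := sub_eq_sub_of_addCircle_coe_eqOn (p := p) isPreconnected_univ
      (h := fun x : ℝ => H (x, y₀)) (f := fun x : ℝ => f x) (by fun_prop) (by fun_prop)
      (fun x _ => (hH_coe x y₀).trans (hf x)) (Set.mem_univ T) (Set.mem_univ 0)
    simpa [AddCircle.coe_period] using lift_sub_f_const
  have periodic (y : Y) : Function.Periodic (fun x => H (x, y)) T := fun x => by
    have shift_const := sub_eq_sub_of_addCircle_coe_eqOn (p := p) isPreconnected_univ
      (h := fun w : ℝ × Y => H (w.1 + T, w.2)) (f := H) (by fun_prop) (by fun_prop)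
      (fun w _ => by rw [hH_coe, ← Prod.mk.eta (p := w), hH_coe, AddCircle.coe_add_period])
      (Set.mem_univ (x, y)) (Set.mem_univ (0, y₀))
    simp only [zero_add, period_at_y₀, sub_self] at shift_const
    exact sub_eq_zero.1 shift_const
  let h : AddCircle T × Y → ℝ := fun z => (periodic z.2).lift z.1
  have hcont : Continuous h := hq.isQuotientMap.continuous_iff.2 H.continuous
  refine ⟨⟨h, hcont⟩, fun z => ?_⟩
  obtain ⟨w, rfl⟩ := hq.surjective z
  exact hH w

theorem isPreconnected_inter_of_circle_subset {Y : Type*} [TopologicalSpace Y]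
    [ContractibleSpace Y] [LocallyPathConnectedSpace Y] {T : ℝ} [NormalSpace (AddCircle T × Y)]
    {P Q : Set (AddCircle T × Y)} (hPc : IsClosed P) (hQc : IsClosed Q) (hP : IsPreconnected P)
    (hQ : IsPreconnected Q) (hPQ : P ∪ Q = Set.univ) {y₀ : Y} (hy₀ : ∀ x, (x, y₀) ∈ P) :
    IsPreconnected (P ∩ Q) :=
  isPreconnected_inter_of_exists_lift hPc hQc hP hQ hPQ fun g hg =>
    exists_real_lift_addCircle_prod g (y₀ := y₀) 0 fun x => by simpa using hg (hy₀ x)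

/-! ### The two ends of the annulus -/

instance locallyConnectedSpace_addCircle (T : ℝ) : LocallyConnectedSpace (AddCircle T) :=
  have : LocallyPathConnectedSpace (AddCircle T) :=
    QuotientAddGroup.isOpenQuotientMap_mk.isQuotientMap.locallyPathConnectedSpace
  inferInstance

/-- The filter of neighbourhoods of the upper end of the annulus. -/
abbrev upperEnd : Filter Ann := comap Prod.snd atTop

/-- The filter of neighbourhoods of the lower end of the annulus. -/
abbrev lowerEnd : Filter Ann := comap Prod.snd atBot

theorem unbAbove_iff_frequently {S : Set Ann} : UnbAbove S ↔ ∃ᶠ z in upperEnd, z ∈ S := by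
  simp only [UnbAbove, not_bddAbove_iff, frequently_comap, frequently_atTop', Set.mem_image,
    gt_iff_lt, and_comm]

theorem unbBelow_iff_frequently {S : Set Ann} : UnbBelow S ↔ ∃ᶠ z in lowerEnd, z ∈ S := by
  simp only [UnbBelow, not_bddBelow_iff, frequently_comap, frequently_atBot', Set.mem_image,
    and_comm]

theorem unbAbove_of_mem_upperEnd {S : Set Ann} (hS : S ∈ upperEnd) : UnbAbove S :=
  unbAbove_iff_frequently.2 (Eventually.frequently hS)

theorem unbBelow_of_mem_lowerEnd {S : Set Ann} (hS : S ∈ lowerEnd) : UnbBelow S :=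
  unbBelow_iff_frequently.2 (Eventually.frequently hS)

theorem not_unbAbove_of_disjoint {S V : Set Ann} (hV : V ∈ upperEnd) (hVS : Disjoint V S) :
    ¬ UnbAbove S := fun hS =>
  let ⟨_, hzS, hzV⟩ := ((unbAbove_iff_frequently.1 hS).and_eventually hV).exists
  Set.disjoint_left.1 hVS hzV hzS

theorem not_unbBelow_of_disjoint {S V : Set Ann} (hV : V ∈ lowerEnd) (hVS : Disjoint V S) :
    ¬ UnbBelow S := fun hS =>
  let ⟨_, hzS, hzV⟩ := ((unbBelow_iff_frequently.1 hS).and_eventually hV).exists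
  Set.disjoint_left.1 hVS hzV hzS

theorem cocompact_ann : cocompact Ann = lowerEnd ⊔ upperEnd := by
  rw [← coprod_cocompact, cocompact_eq_bot, bot_coprod, cocompact_eq_atBot_atTop, comap_sup]

theorem exists_isPreconnected_mem_upperEnd {S : Set Ann} (hS : S ∈ upperEnd) :
    ∃ V ∈ upperEnd, IsPreconnected V ∧ V ⊆ S := by
  obtain ⟨M, -, hM⟩ := (atTop_basis.comap Prod.snd).mem_iff.1 hS
  refine ⟨_, preimage_mem_comap (Ici_mem_atTop M), ?_, hM⟩
  rw [← Set.univ_prod]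
  exact isPreconnected_univ.prod isPreconnected_Ici

theorem exists_isPreconnected_mem_lowerEnd {S : Set Ann} (hS : S ∈ lowerEnd) :
    ∃ V ∈ lowerEnd, IsPreconnected V ∧ V ⊆ S := by
  obtain ⟨m, -, hm⟩ := (atBot_basis.comap Prod.snd).mem_iff.1 hS
  refine ⟨_, preimage_mem_comap (Iic_mem_atBot m), ?_, hm⟩
  rw [← Set.univ_prod]
  exact isPreconnected_univ.prod isPreconnected_Iic

theorem connectedComponentIn_mem_upperEnd {F : Set Ann} {x : Ann} (hF : F ∈ upperEnd)
    (hx : UnbAbove (connectedComponentIn F x)) : connectedComponentIn F x ∈ upperEnd :=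
  let ⟨_, hVl, hV, hVF⟩ := exists_isPreconnected_mem_upperEnd hF
  connectedComponentIn_mem_of_frequently hV hVl hVF (unbAbove_iff_frequently.1 hx)

theorem connectedComponentIn_mem_lowerEnd {F : Set Ann} {x : Ann} (hF : F ∈ lowerEnd)
    (hx : UnbBelow (connectedComponentIn F x)) : connectedComponentIn F x ∈ lowerEnd :=
  let ⟨_, hVl, hV, hVF⟩ := exists_isPreconnected_mem_lowerEnd hF
  connectedComponentIn_mem_of_frequently hV hVl hVF (unbBelow_iff_frequently.1 hx)

theorem upperComp_eq_compl_closure {S : Set Ann} (hc : IsPreconnected (closure S)ᶜ)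
    (hend : (closure S)ᶜ ∈ upperEnd) : upperComp S = (closure S)ᶜ := by
  ext z
  refine ⟨And.left, fun hz => ⟨hz, ?_⟩⟩
  rw [hc.connectedComponentIn hz]
  exact unbAbove_of_mem_upperEnd hend

theorem lowerComp_eq_compl_closure {S : Set Ann} (hc : IsPreconnected (closure S)ᶜ)
    (hend : (closure S)ᶜ ∈ lowerEnd) : lowerComp S = (closure S)ᶜ := by
  ext z
  refine ⟨And.left, fun hz => ⟨hz, ?_⟩⟩
  rw [hc.connectedComponentIn hz]
  exact unbBelow_of_mem_lowerEnd hend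

/-! ### Sets separating the two ends -/

/-- `A` separates the two ends of the annulus, its complement being the disjoint union of the
connected open sets `U` and `L`, which are neighbourhoods of the upper and the lower end.
Such an `A` is compact, but it may be disconnected. -/
structure IsEndSeparation (A U L : Set Ann) : Prop where
  isOpen_upper : IsOpen U
  isOpen_lower : IsOpen L
  disjoint : Disjoint U L
  compl_eq : Aᶜ = U ∪ L
  isPreconnected_upper : IsPreconnected U
  isPreconnected_lower : IsPreconnected L
  upper_mem : U ∈ upperEnd
  lower_mem : L ∈ lowerEnd

theorem isEndSeparation_connectedComponentIn {E : Set Ann} {x y : Ann} (hE : IsClosed E)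
    (hxy : connectedComponentIn Eᶜ x ≠ connectedComponentIn Eᶜ y)
    (hall : ∀ z ∈ Eᶜ, connectedComponentIn Eᶜ z = connectedComponentIn Eᶜ x ∨
      connectedComponentIn Eᶜ z = connectedComponentIn Eᶜ y)
    (hx : connectedComponentIn Eᶜ x ∈ upperEnd) (hy : connectedComponentIn Eᶜ y ∈ lowerEnd) :
    IsEndSeparation E (connectedComponentIn Eᶜ x) (connectedComponentIn Eᶜ y) where
  isOpen_upper := hE.isOpen_compl.connectedComponentIn
  isOpen_lower := hE.isOpen_compl.connectedComponentIn
  disjoint := disjoint_connectedComponentIn hxy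
  compl_eq := by
    refine Set.Subset.antisymm (fun z hz => ?_) (Set.union_subset
      (connectedComponentIn_subset _ _) (connectedComponentIn_subset _ _))
    rcases hall z hz with hzx | hzy
    · exact Or.inl (hzx ▸ mem_connectedComponentIn hz)
    · exact Or.inr (hzy ▸ mem_connectedComponentIn hz)
  isPreconnected_upper := isPreconnected_connectedComponentIn
  isPreconnected_lower := isPreconnected_connectedComponentIn
  upper_mem := hx
  lower_mem := hy

theorem exists_isEndSeparation {E : Set Ann} (hE : IsAnnularContinuum E) :
    ∃ U L, IsEndSeparation E U L := by
  obtain ⟨hcomp, -, hunb, x, y, hx, hy, hxy, hall⟩ := hE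
  have hends : Eᶜ ∈ lowerEnd ⊔ upperEnd := cocompact_ann ▸ hcomp.compl_mem_cocompact
  have hdisj := disjoint_connectedComponentIn hxy
  have mem_end (z : Ann) (hz : z ∈ Eᶜ) :
      connectedComponentIn Eᶜ z ∈ upperEnd ∨ connectedComponentIn Eᶜ z ∈ lowerEnd :=
    (not_and_or.1 (hunb z hz)).imp (connectedComponentIn_mem_upperEnd hends.2)
      (connectedComponentIn_mem_lowerEnd hends.1)
  rcases mem_end x hx with hxU | hxL <;> rcases mem_end y hy with hyU | hyL
  · exact absurd (unbAbove_of_mem_upperEnd hyU) (not_unbAbove_of_disjoint hxU hdisj)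
  · exact ⟨_, _, isEndSeparation_connectedComponentIn hcomp.isClosed hxy hall hxU hyL⟩
  · exact ⟨_, _, isEndSeparation_connectedComponentIn hcomp.isClosed hxy.symm
      (fun z hz => (hall z hz).symm) hyU hxL⟩
  · exact absurd (unbBelow_of_mem_lowerEnd hyL) (not_unbBelow_of_disjoint hxL hdisj)

namespace IsEndSeparation

variable {A U L E U' L' : Set Ann}

theorem isClosed (h : IsEndSeparation A U L) : IsClosed A :=
  isOpen_compl_iff.1 (h.compl_eq ▸ h.isOpen_upper.union h.isOpen_lower)

theorem isCompact (h : IsEndSeparation A U L) : IsCompact A := by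
  have hends : Aᶜ ∈ cocompact Ann := by
    rw [cocompact_ann, h.compl_eq]
    exact ⟨mem_of_superset h.lower_mem Set.subset_union_right,
      mem_of_superset h.upper_mem Set.subset_union_left⟩
  obtain ⟨K, hK, hKA⟩ := mem_cocompact.1 hends
  exact hK.of_isClosed_subset h.isClosed (Set.compl_subset_compl.1 hKA)

theorem connectedComponentIn_compl_of_mem_upper (h : IsEndSeparation A U L) {z : Ann}
    (hz : z ∈ U) : connectedComponentIn Aᶜ z = U := by
  rw [h.compl_eq]
  exact connectedComponentIn_union_eq_left h.isOpen_upper h.isOpen_lower h.disjoint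
    h.isPreconnected_upper hz

theorem connectedComponentIn_compl_of_mem_lower (h : IsEndSeparation A U L) {z : Ann}
    (hz : z ∈ L) : connectedComponentIn Aᶜ z = L := by
  rw [h.compl_eq, Set.union_comm]
  exact connectedComponentIn_union_eq_left h.isOpen_lower h.isOpen_upper h.disjoint.symm
    h.isPreconnected_lower hz

theorem upperComp_eq (h : IsEndSeparation A U L) : upperComp A = U := by
  ext z
  simp only [upperComp, h.isClosed.closure_eq, Set.mem_ofPred_eq]
  constructor
  · rintro ⟨hzA, hunb⟩
    refine (h.compl_eq ▸ hzA : z ∈ U ∪ L).resolve_right fun hzL => ?_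
    rw [h.connectedComponentIn_compl_of_mem_lower hzL] at hunb
    exact not_unbAbove_of_disjoint h.upper_mem h.disjoint hunb
  · intro hzU
    rw [h.connectedComponentIn_compl_of_mem_upper hzU, h.compl_eq]
    exact ⟨Or.inl hzU, unbAbove_of_mem_upperEnd h.upper_mem⟩

theorem lowerComp_eq (h : IsEndSeparation A U L) : lowerComp A = L := by
  ext z
  simp only [lowerComp, h.isClosed.closure_eq, Set.mem_ofPred_eq]
  constructor
  · rintro ⟨hzA, hunb⟩
    refine (h.compl_eq ▸ hzA : z ∈ U ∪ L).resolve_left fun hzU => ?_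
    rw [h.connectedComponentIn_compl_of_mem_upper hzU] at hunb
    exact not_unbBelow_of_disjoint h.lower_mem h.disjoint.symm hunb
  · intro hzL
    rw [h.connectedComponentIn_compl_of_mem_lower hzL, h.compl_eq]
    exact ⟨Or.inr hzL, unbBelow_of_mem_lowerEnd h.lower_mem⟩

theorem isAnnularContinuum (h : IsEndSeparation A U L) (hA : IsConnected A) :
    IsAnnularContinuum A := by
  obtain ⟨x, hx⟩ := nonempty_of_mem h.upper_mem
  obtain ⟨y, hy⟩ := nonempty_of_mem h.lower_mem
  have component_eq (z : Ann) (hz : z ∈ Aᶜ) :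
      connectedComponentIn Aᶜ z = U ∨ connectedComponentIn Aᶜ z = L :=
    (h.compl_eq ▸ hz : z ∈ U ∪ L).imp h.connectedComponentIn_compl_of_mem_upper
      h.connectedComponentIn_compl_of_mem_lower
  refine ⟨h.isCompact, hA, fun z hz hbdd => ?_, x, y, ?_⟩
  · rcases component_eq z hz with hU | hL
    · exact unbAbove_of_mem_upperEnd h.upper_mem (hU ▸ hbdd.1)
    · exact unbBelow_of_mem_lowerEnd h.lower_mem (hL ▸ hbdd.2)
  · rw [h.connectedComponentIn_compl_of_mem_upper hx, h.connectedComponentIn_compl_of_mem_lower hy]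
    have hUL : U ≠ L := fun hUL => Set.disjoint_left.1 h.disjoint hx (hUL ▸ hx)
    exact ⟨h.compl_eq ▸ Or.inl hx, h.compl_eq ▸ Or.inr hy, hUL, component_eq⟩

theorem upper_subset_upper (h : IsEndSeparation A U L) (h' : IsEndSeparation E U' L')
    (hEA : E ⊆ A) : U ⊆ U' := by
  refine h.isPreconnected_upper.subset_left_of_subset_union h'.isOpen_upper h'.isOpen_lower
    h'.disjoint ?_ (nonempty_of_mem (inter_mem h.upper_mem h'.upper_mem))
  rw [← h'.compl_eq]
  exact (Set.subset_union_left.trans h.compl_eq.ge).trans (Set.compl_subset_compl.2 hEA)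

theorem lower_subset_lower (h : IsEndSeparation A U L) (h' : IsEndSeparation E U' L')
    (hEA : E ⊆ A) : L ⊆ L' := by
  refine h.isPreconnected_lower.subset_right_of_subset_union h'.isOpen_upper h'.isOpen_lower
    h'.disjoint ?_ (nonempty_of_mem (inter_mem h.lower_mem h'.lower_mem))
  rw [← h'.compl_eq]
  exact (Set.subset_union_right.trans h.compl_eq.ge).trans (Set.compl_subset_compl.2 hEA)

theorem closure_inter_closure_subset (h : IsEndSeparation A U L) : closure U ∩ closure L ⊆ A := by
  rintro z ⟨hzU, hzL⟩
  by_contra hz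
  rcases (h.compl_eq ▸ hz : z ∈ U ∪ L) with hz | hz
  · exact Set.disjoint_left.1 (h.disjoint.closure_right h.isOpen_upper) hz hzL
  · exact Set.disjoint_left.1 (h.disjoint.closure_left h.isOpen_lower) hzU hz

theorem closure_inter_closure_subset_of_isAnnularContinuum (h : IsEndSeparation A U L)
    (hE : IsAnnularContinuum E) (hEA : E ⊆ A) : closure U ∩ closure L ⊆ E := by
  obtain ⟨U', L', h'⟩ := exists_isEndSeparation hE
  exact (Set.inter_subset_inter (closure_mono (h.upper_subset_upper h' hEA))
    (closure_mono (h.lower_subset_lower h' hEA))).trans h'.closure_inter_closure_subset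

theorem closure_union_closure (h : IsEndSeparation A U L) (hint : interior A = ∅) :
    closure U ∪ closure L = Set.univ := by
  rw [← closure_union, ← h.compl_eq, closure_compl, hint, Set.compl_empty]

theorem compl_closure_lower_mem (h : IsEndSeparation A U L) : (closure L)ᶜ ∈ upperEnd :=
  mem_of_superset h.upper_mem (h.disjoint.closure_right h.isOpen_upper).subset_compl_right

theorem compl_closure_upper_mem (h : IsEndSeparation A U L) : (closure U)ᶜ ∈ lowerEnd :=
  mem_of_superset h.lower_mem (h.disjoint.closure_left h.isOpen_lower).subset_compl_left

theorem isEndSeparation_closure_inter_closure (h : IsEndSeparation A U L)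
    (hint : interior A = ∅) :
    IsEndSeparation (closure U ∩ closure L) (closure L)ᶜ (closure U)ᶜ where
  isOpen_upper := isClosed_closure.isOpen_compl
  isOpen_lower := isClosed_closure.isOpen_compl
  disjoint := Set.disjoint_compl_left_iff_subset.2
    (Set.compl_subset_iff_union.2 (h.closure_union_closure hint))
  compl_eq := by rw [Set.compl_inter, Set.union_comm]
  isPreconnected_upper := isPreconnected_compl_closure_of_disjoint h.isOpen_upper
    h.isPreconnected_upper h.disjoint (Set.union_comm _ _ ▸ h.closure_union_closure hint)
  isPreconnected_lower := isPreconnected_compl_closure_of_disjoint h.isOpen_lower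
    h.isPreconnected_lower h.disjoint.symm (h.closure_union_closure hint)
  upper_mem := h.compl_closure_lower_mem
  lower_mem := h.compl_closure_upper_mem

theorem isConnected_closure_inter_closure (h : IsEndSeparation A U L) (hint : interior A = ∅) :
    IsConnected (closure U ∩ closure L) := by
  have hcover := h.closure_union_closure hint
  constructor
  · have hmeet := isPreconnected_closed_iff.1 (isPreconnected_univ (α := Ann)) _ _
      isClosed_closure isClosed_closure hcover.ge
      (by simpa using nonempty_of_mem h.upper_mem) (by simpa using nonempty_of_mem h.lower_mem)
    simpa using hmeet
  · obtain ⟨t, ht⟩ := (eventually_comap.1 h.upper_mem).exists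
    exact isPreconnected_inter_of_circle_subset isClosed_closure isClosed_closure
      h.isPreconnected_upper.closure h.isPreconnected_lower.closure hcover
      fun x => subset_closure (ht (x, t) rfl)

theorem cminus_eq (h : IsEndSeparation A U L) (hint : interior A = ∅) :
    Cminus A = closure U ∩ closure L := by
  have h' := h.isEndSeparation_closure_inter_closure hint
  have hregular : closure (closure L)ᶜ = closure U :=
    closure_compl_closure_of_disjoint h.isOpen_upper h.disjoint
      (Set.union_comm _ _ ▸ h.closure_union_closure hint)
  have hlower : lowerComp (closure L)ᶜ = (closure U)ᶜ := by
    rw [lowerComp_eq_compl_closure] <;> rw [hregular]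
    exacts [h'.isPreconnected_lower, h'.lower_mem]
  rw [Cminus, h.lowerComp_eq, upperComp_eq_compl_closure h'.isPreconnected_upper h'.upper_mem,
    hlower, ← h'.compl_eq, compl_compl]

theorem cplus_eq (h : IsEndSeparation A U L) (hint : interior A = ∅) :
    Cplus A = closure U ∩ closure L := by
  have h' := h.isEndSeparation_closure_inter_closure hint
  have hregular : closure (closure U)ᶜ = closure L :=
    closure_compl_closure_of_disjoint h.isOpen_lower h.disjoint.symm (h.closure_union_closure hint)
  have hupper : upperComp (closure U)ᶜ = (closure L)ᶜ := by
    rw [upperComp_eq_compl_closure] <;> rw [hregular]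
    exacts [h'.isPreconnected_upper, h'.upper_mem]
  rw [Cplus, h.upperComp_eq, lowerComp_eq_compl_closure h'.isPreconnected_lower h'.lower_mem,
    hupper, Set.union_comm, ← h'.compl_eq, compl_compl]

theorem isCircloidA_closure_inter_closure (h : IsEndSeparation A U L) (hint : interior A = ∅) :
    IsCircloidA (closure U ∩ closure L) :=
  ⟨(h.isEndSeparation_closure_inter_closure hint).isAnnularContinuum
      (h.isConnected_closure_inter_closure hint),
    fun _ hsub hE => hsub.antisymm (h.closure_inter_closure_subset_of_isAnnularContinuum hE
      (hsub.trans h.closure_inter_closure_subset))⟩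

theorem eq_closure_inter_closure_of_isCircloidA (h : IsEndSeparation A U L)
    (hint : interior A = ∅) {C : Set Ann} (hC : IsCircloidA C) (hCA : C ⊆ A) :
    C = closure U ∩ closure L :=
  (hC.2 _ (h.closure_inter_closure_subset_of_isAnnularContinuum hC.1 hCA)
    (h.isCircloidA_closure_inter_closure hint).1).symm

end IsEndSeparation

theorem statement12_general {A U L : Set Ann} (h : IsEndSeparation A U L)
    (hint : interior A = ∅) :
    Cminus A = frontier (upperComp A) ∩ frontier (lowerComp A) ∧
    Cplus A = frontier (upperComp A) ∩ frontier (lowerComp A) ∧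
    IsCircloidA (frontier (upperComp A) ∩ frontier (lowerComp A)) ∧
    frontier (upperComp A) ∩ frontier (lowerComp A) ⊆ A ∧
    ∀ C ⊆ A, IsCircloidA C →
      C = frontier (upperComp A) ∩ frontier (lowerComp A) := by
  rw [h.upperComp_eq, h.lowerComp_eq,
    frontier_inter_frontier_of_disjoint h.isOpen_upper h.isOpen_lower h.disjoint]
  exact ⟨h.cminus_eq hint, h.cplus_eq hint, h.isCircloidA_closure_inter_closure hint,
    h.closure_inter_closure_subset,
    fun _ hCA hC => h.eq_closure_inter_closure_of_isCircloidA hint hC hCA⟩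

/-- **Lemma 3.4.**  If `A` is an annular continuum with empty interior, then
`𝒞⁻(A) = 𝒞⁺(A) = ∂𝒰(A) ∩ ∂ℒ(A)`, and this set is the only circloid contained in `A`. -/
theorem statement12 (A : Set Ann) (hA : IsAnnularContinuum A) (hint : interior A = ∅) :
    Cminus A = frontier (upperComp A) ∩ frontier (lowerComp A) ∧
    Cplus A = frontier (upperComp A) ∩ frontier (lowerComp A) ∧
    IsCircloidA (frontier (upperComp A) ∩ frontier (lowerComp A)) ∧
    frontier (upperComp A) ∩ frontier (lowerComp A) ⊆ A ∧
    ∀ C ⊆ A, IsCircloidA C →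
      C = frontier (upperComp A) ∩ frontier (lowerComp A) := by
  obtain ⟨U, L, hUL⟩ := exists_isEndSeparation hA
  exact statement12_general hUL hint
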